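/- Let s, a, b ∈ ℂ with Re(s) > 2, Re(a) > 0, and −Re(a) < Im(b) < Re(a). Then (1/(2Γ(s))) ∫₀^∞ x^{s−1}/(cosh(ax) − cos(bx)) dx = ζ₂(s, a | a − bi, a + bi) and (1/(2Γ(s))) ∫₀^∞ x^{s−1}/(cosh(ax) + cos(bx)) dx = ζ̃₂(s, a | a − bi, a + bi). In particular, (1/(2Γ(s))) ∫₀^∞ x^{s−1}/(cosh x − cos x) dx = ζ₂(s, 1 | 1 − i, 1 + i). -/

import Mathlib

/-!
Writing `cosh A - cos B = e^A (1 - e^{-(A - iB)}) (1 - e^{-(A + iB)}) / 2` with `A = a x` and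
`B = b x + θ`, two geometric series expand `1 / (cosh (a x) - cos (b x + θ))` for `x > 0` into
`2 ∑ e^{i (n - m) θ} e^{-(a + n (a - b i) + m (a + b i)) x}`; the bounds on `Im b` say exactly that
the rates `a ± b i` have positive real part. Integrating termwise against `x ^ (s - 1)` turns this
into a Barnes zeta series twisted by `e^{i (n - m) θ}`: the plain one for `θ = 0`, and the
alternating one for `θ = π`, where `cos (b x + π) = -cos (b x)`. A single term is Euler's integral
at a complex rate, obtained from real rates by analytic continuation; the interchange of sum and
integral rests on the convergence of `∑ (w + n α + m β) ^ (-Re s)` for `Re s > 2`.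
-/

open MeasureTheory

/-- The Barnes zeta function `ζ₂(s, w | a₁, a₂)`. -/
noncomputable def barnesZeta2 (s w a₁ a₂ : ℂ) : ℂ :=
  ∑' nm : ℕ × ℕ, (w + (nm.1 : ℂ) * a₁ + (nm.2 : ℂ) * a₂) ^ (-s)

/-- The alternating Barnes zeta function `ζ̃₂(s, w | a₁, a₂)`. -/
noncomputable def barnesZeta2Alt (s w a₁ a₂ : ℂ) : ℂ :=
  ∑' nm : ℕ × ℕ, (-1 : ℂ) ^ (nm.1 + nm.2) * (w + (nm.1 : ℂ) * a₁ + (nm.2 : ℂ) * a₂) ^ (-s)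

open Complex Filter Set Topology

section EulerIntegral

variable {s r : ℂ}

lemma mellinConvergent_cexp_neg_mul (hs : 0 < s.re) (hr : 0 < r.re) :
    MellinConvergent (fun t : ℝ ↦ cexp (-(r * t))) s := by
  refine (mellin_convergent_iff_norm Subset.rfl measurableSet_Ioi (by fun_prop)).2 ?_
  have h : IntegrableOn (fun t : ℝ ↦ t ^ (s.re - 1) * Real.exp (-r.re * t ^ (1 : ℝ))) (Ioi 0) :=
    integrableOn_rpow_mul_exp_neg_mul_rpow (by linarith) one_pos hr
  simpa [norm_exp] using h

lemma norm_cpow_smul_cexp_neg_mul {t : ℝ} (ht : 0 < t) :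
    ‖(t : ℂ) ^ (s - 1) • cexp (-(r * t))‖ = t ^ (s.re - 1) * Real.exp (-(r.re * t)) := by
  simp [norm_cpow_eq_rpow_re_of_pos ht, norm_exp]

lemma integral_norm_cpow_smul_cexp_neg_mul (hs : 0 < s.re) (hr : 0 < r.re) :
    ∫ t in Ioi (0 : ℝ), ‖(t : ℂ) ^ (s - 1) • cexp (-(r * t))‖ =
      Real.Gamma s.re / r.re ^ s.re := by
  rw [setIntegral_congr_fun measurableSet_Ioi fun t ht ↦ norm_cpow_smul_cexp_neg_mul ht,
    Real.integral_rpow_mul_exp_neg_mul_Ioi hs hr, one_div, Real.inv_rpow hr.le, div_eq_inv_mul]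

lemma hasDerivAt_mellin_cexp_neg_mul (hs : 0 < s.re) (hr : 0 < r.re) :
    HasDerivAt (fun r : ℂ ↦ mellin (fun t : ℝ ↦ cexp (-(r * t))) s)
      (-mellin (fun t : ℝ ↦ cexp (-(r * t))) (s + 1)) r := by
  have hs' : 0 < (s + 1).re := by rw [add_re, one_re]; linarith
  have hr' : 0 < ((r.re / 2 : ℝ) : ℂ).re := by simpa using hr
  have hball {z : ℂ} (hz : z ∈ Metric.ball r (r.re / 2)) : r.re / 2 ≤ z.re := by
    have := (abs_lt.1 ((abs_re_le_norm (z - r)).trans_lt (mem_ball_iff_norm.1 hz))).1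
    rw [sub_re] at this
    linarith
  rw [mellin, ← integral_neg]
  refine (hasDerivAt_integral_of_dominated_loc_of_deriv_le
    (F := fun (z : ℂ) (t : ℝ) ↦ (t : ℂ) ^ (s - 1) • cexp (-(z * t)))
    (F' := fun (z : ℂ) (t : ℝ) ↦ -((t : ℂ) ^ (s + 1 - 1) • cexp (-(z * t))))
    (bound := fun t : ℝ ↦ ‖(t : ℂ) ^ (s + 1 - 1) • cexp (-(((r.re / 2 : ℝ) : ℂ) * t))‖)
    (Metric.ball_mem_nhds r (half_pos hr)) ?_ (mellinConvergent_cexp_neg_mul hs hr)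
    (mellinConvergent_cexp_neg_mul hs' hr).neg.aestronglyMeasurable ?_
    (mellinConvergent_cexp_neg_mul hs' hr').norm ?_).2
  · filter_upwards [Metric.ball_mem_nhds r (half_pos hr)] with z hz
    exact (mellinConvergent_cexp_neg_mul hs
      ((half_pos hr).trans_le (hball hz))).aestronglyMeasurable
  · filter_upwards [ae_restrict_mem measurableSet_Ioi] with t (ht : 0 < t) z hz
    rw [norm_neg, norm_cpow_smul_cexp_neg_mul ht, norm_cpow_smul_cexp_neg_mul ht, ofReal_re]
    gcongr
    exact hball hz
  · filter_upwards [ae_restrict_mem measurableSet_Ioi] with t (ht : 0 < t) z _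
    have hpow : (t : ℂ) ^ (s + 1 - 1) = (t : ℂ) ^ (s - 1) * t := by
      rw [add_sub_right_comm, cpow_add _ _ (ofReal_ne_zero.2 ht.ne'), cpow_one]
    have hexp : HasDerivAt (fun z : ℂ ↦ cexp (-(z * t))) (cexp (-(z * t)) * -(1 * t)) z :=
      ((hasDerivAt_id z).mul_const (t : ℂ)).neg.cexp
    convert! hexp.const_smul ((t : ℂ) ^ (s - 1)) using 1
    rw [hpow, smul_eq_mul, smul_eq_mul]
    ring

lemma eqOn_re_pos_of_eq_ofReal {E : Type*} [NormedAddCommGroup E] [NormedSpace ℂ E]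
    [CompleteSpace E] {f g : ℂ → E} (hf : DifferentiableOn ℂ f {z | 0 < z.re})
    (hg : DifferentiableOn ℂ g {z | 0 < z.re}) (hfg : ∀ x : ℝ, 0 < x → f x = g x) :
    EqOn f g {z | 0 < z.re} := by
  have hopen : IsOpen {z : ℂ | 0 < z.re} := isOpen_lt continuous_const continuous_re
  have hlim : Tendsto ((↑) : ℝ → ℂ) (𝓝[≠] 1) (𝓝[≠] 1) :=
    (continuous_ofReal.tendsto' 1 1 ofReal_one).inf
      (tendsto_principal_principal.2 fun x hx ↦ ofReal_ne_one.2 hx)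
  have hpos : ∀ᶠ x : ℝ in 𝓝[≠] 1, 0 < x := eventually_nhdsWithin_of_eventually_nhds
    (eventually_gt_nhds one_pos)
  exact (hf.analyticOnNhd hopen).eqOn_of_preconnected_of_frequently_eq (hg.analyticOnNhd hopen)
    (convex_halfSpace_re_gt 0).isPreconnected (z₀ := 1) (by simp)
    (hlim.frequently (hpos.mono hfg).frequently)

lemma mellin_cexp_neg_mul (hs : 0 < s.re) (hr : 0 < r.re) :
    mellin (fun t : ℝ ↦ cexp (-(r * t))) s = Gamma s / r ^ s := by
  have hcpow {z : ℂ} (hz : 0 < z.re) : z ^ s ≠ 0 := by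
    have hz0 : z ≠ 0 := by rintro rfl; simp at hz
    simp [cpow_eq_zero_iff, hz0]
  refine eqOn_re_pos_of_eq_ofReal (f := fun z ↦ mellin (fun t : ℝ ↦ cexp (-(z * t))) s)
    (g := fun z ↦ Gamma s / z ^ s) (fun z hz ↦ ?_) (fun z hz ↦ ?_) (fun x hx ↦ ?_) hr
  · exact (hasDerivAt_mellin_cexp_neg_mul hs hz).differentiableAt.differentiableWithinAt
  · exact ((differentiableAt_const _).div (differentiableAt_id.cpow_const (Or.inl hz))
      (hcpow hz)).differentiableWithinAt
  · simp only [mellin, smul_eq_mul]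
    rw [integral_cpow_mul_exp_neg_mul_Ioi hs hx, one_div,
      inv_cpow _ _ (arg_ofReal_of_nonneg hx.le ▸ Real.pi_pos.ne), div_eq_inv_mul]

/-- Unlike in Mathlib's `hasSum_mellin`, the frequencies `p i` may be complex. -/
lemma hasSum_mellin_of_re_pos {ι : Type*} [Countable ι] {a p : ι → ℂ} {F : ℝ → ℂ}
    (hs : 0 < s.re) (hp : ∀ i, 0 < (p i).re)
    (hF : ∀ t ∈ Ioi (0 : ℝ), HasSum (fun i ↦ a i * cexp (-(p i * t))) (F t))
    (h_sum : Summable fun i ↦ ‖a i‖ / (p i).re ^ s.re) :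
    HasSum (fun i ↦ Gamma s * (a i / p i ^ s)) (mellin F s) := by
  have hterm (i : ι) := hasMellin_const_smul (mellinConvergent_cexp_neg_mul hs (hp i)) (a i)
  have hnorm (i : ι) : ∫ t in Ioi (0 : ℝ), ‖(t : ℂ) ^ (s - 1) • a i • cexp (-(p i * t))‖ =
      Real.Gamma s.re * (‖a i‖ / (p i).re ^ s.re) := by
    simp only [smul_comm _ (a i), norm_smul (a i), integral_const_mul,
      integral_norm_cpow_smul_cexp_neg_mul hs (hp i)]
    ring
  have hF' : mellin F s = ∫ t in Ioi (0 : ℝ), ∑' i, (t : ℂ) ^ (s - 1) • a i • cexp (-(p i * t)) :=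
    setIntegral_congr_fun measurableSet_Ioi fun t ht ↦ ((hF t ht).const_smul _).tsum_eq.symm
  rw [hF']
  refine (hasSum_integral_of_summable_integral_norm (fun i ↦ (hterm i).1) ?_).congr_fun fun i ↦ ?_
  · simpa only [hnorm] using h_sum.mul_left _
  · have hmellin := (hterm i).2
    rw [mellin_cexp_neg_mul hs (hp i), mellin, smul_eq_mul] at hmellin
    rw [hmellin, mul_div_left_comm]

end EulerIntegral

lemma summable_add_natCast_mul_rpow {p w α : ℝ} (hp : 1 < p) (hw : 0 < w) (hα : 0 < α) :
    Summable fun n : ℕ ↦ (w + n * α) ^ (-p) := by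
  refine (((Real.summable_one_div_nat_add_rpow (w / α) p).2 hp).mul_left (α ^ (-p))).congr
    fun n ↦ ?_
  have hn : 0 < n + w / α := by positivity
  rw [abs_of_pos hn, one_div, ← Real.rpow_neg hn.le, ← Real.mul_rpow hα.le hn.le]
  congr 1
  field_simp
  ring

lemma add_rpow_neg_le_rpow_mul_rpow {x y σ : ℝ} (hx : 0 < x) (hy : 0 < y) (hσ : 0 ≤ σ) :
    (x + y) ^ (-σ) ≤ x ^ (-(σ / 2)) * y ^ (-(σ / 2)) := by
  calc (x + y) ^ (-σ) = ((x + y) ^ 2) ^ (-(σ / 2)) := by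
        rw [← Real.rpow_natCast_mul (by positivity)]
        congr 1
        push_cast
        ring
    _ ≤ (x * y) ^ (-(σ / 2)) :=
        Real.rpow_le_rpow_of_nonpos (by positivity) (by nlinarith) (by linarith)
    _ = x ^ (-(σ / 2)) * y ^ (-(σ / 2)) := Real.mul_rpow hx.le hy.le

lemma summable_add_natCast_mul_add_natCast_mul_rpow {σ w α β : ℝ} (hσ : 2 < σ) (hw : 0 < w)
    (hα : 0 < α) (hβ : 0 < β) :
    Summable fun nm : ℕ × ℕ ↦ (w + nm.1 * α + nm.2 * β) ^ (-σ) := by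
  have hσ2 : 1 < σ / 2 := by linarith
  have hprod := (summable_add_natCast_mul_rpow hσ2 (half_pos hw) hα).mul_of_nonneg
    (summable_add_natCast_mul_rpow hσ2 (half_pos hw) hβ) (fun _ ↦ by positivity)
    (fun _ ↦ by positivity)
  refine hprod.of_nonneg_of_le (fun nm ↦ by positivity) fun nm ↦ ?_
  calc (w + nm.1 * α + nm.2 * β) ^ (-σ) = ((w / 2 + nm.1 * α) + (w / 2 + nm.2 * β)) ^ (-σ) := by
        ring_nf
    _ ≤ _ := add_rpow_neg_le_rpow_mul_rpow (by positivity) (by positivity) (by linarith)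

section GeometricSeries

variable {u v w α β : ℂ}

lemma hasSum_pow_mul_cexp_neg_mul (hu : ‖u‖ ≤ 1) (hv : ‖v‖ ≤ 1) (hα : 0 < α.re) (hβ : 0 < β.re)
    {x : ℝ} (hx : 0 < x) :
    HasSum (fun nm : ℕ × ℕ ↦ u ^ nm.1 * v ^ nm.2 * cexp (-((w + nm.1 * α + nm.2 * β) * x)))
      (cexp (-(w * x)) / ((1 - u * cexp (-(α * x))) * (1 - v * cexp (-(β * x))))) := by
  have hratio {c γ : ℂ} (hc : ‖c‖ ≤ 1) (hγ : 0 < γ.re) : ‖c * cexp (-(γ * x))‖ < 1 := by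
    have : ‖cexp (-(γ * x))‖ < 1 := by simpa [norm_exp] using mul_pos hγ hx
    rw [norm_mul]
    exact (mul_le_of_le_one_left (norm_nonneg _) hc).trans_lt this
  have hp := hratio hu hα
  have hq := hratio hv hβ
  have hprod := ((hasSum_geometric_of_norm_lt_one hp).mul (hasSum_geometric_of_norm_lt_one hq)
    (summable_mul_of_summable_norm (summable_norm_geometric_of_norm_lt_one hp)
      (summable_norm_geometric_of_norm_lt_one hq))).mul_left (cexp (-(w * x)))
  rw [← mul_inv, ← div_eq_mul_inv] at hprod
  refine hprod.congr_fun fun nm ↦ ?_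
  have hexp : cexp (-((w + nm.1 * α + nm.2 * β) * x)) =
      cexp (-(w * x)) * (cexp (-(α * x)) ^ nm.1 * cexp (-(β * x)) ^ nm.2) := by
    rw [← exp_nat_mul, ← exp_nat_mul, ← exp_add, ← exp_add]
    ring_nf
  rw [hexp, mul_pow, mul_pow]
  ring

lemma hasSum_mellin_geometric {s : ℂ} (hs : 2 < s.re) (hu : ‖u‖ ≤ 1) (hv : ‖v‖ ≤ 1)
    (hw : 0 < w.re) (hα : 0 < α.re) (hβ : 0 < β.re) :
    HasSum (fun nm : ℕ × ℕ ↦ Gamma s * (u ^ nm.1 * v ^ nm.2 / (w + nm.1 * α + nm.2 * β) ^ s))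
      (mellin (fun x : ℝ ↦
        cexp (-(w * x)) / ((1 - u * cexp (-(α * x))) * (1 - v * cexp (-(β * x))))) s) := by
  have hre (nm : ℕ × ℕ) : (w + nm.1 * α + nm.2 * β).re = w.re + nm.1 * α.re + nm.2 * β.re := by
    simp
  have hpos (nm : ℕ × ℕ) : 0 < (w + nm.1 * α + nm.2 * β).re := by rw [hre]; positivity
  refine hasSum_mellin_of_re_pos (by linarith) hpos
    (fun x hx ↦ hasSum_pow_mul_cexp_neg_mul hu hv hα hβ hx) ?_
  refine (summable_add_natCast_mul_add_natCast_mul_rpow hs hw hα hβ).of_nonneg_of_le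
    (fun nm ↦ div_nonneg (norm_nonneg _) (Real.rpow_nonneg (hpos nm).le _)) fun nm ↦ ?_
  have hcoeff : ‖u ^ nm.1 * v ^ nm.2‖ ≤ 1 := by
    rw [norm_mul, norm_pow, norm_pow]
    exact mul_le_one₀ (pow_le_one₀ (norm_nonneg _) hu) (by positivity)
      (pow_le_one₀ (norm_nonneg _) hv)
  rw [← hre, Real.rpow_neg (hpos nm).le, div_eq_mul_inv]
  exact mul_le_of_le_one_left (inv_nonneg.2 (Real.rpow_nonneg (hpos nm).le _)) hcoeff

end GeometricSeries

lemma cosh_sub_cos_eq_cexp_mul (A B : ℂ) :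
    cosh A - cos B =
      cexp A * ((1 - cexp (-(A - B * I))) * (1 - cexp (-(A + B * I)))) / 2 := by
  have hA : cexp A * cexp (-A) = 1 := by rw [← exp_add, add_neg_cancel, exp_zero]
  have hB : cexp (B * I) * cexp (-B * I) = 1 := by rw [← exp_add]; simp
  have hsub : cexp (-(A - B * I)) = cexp (-A) * cexp (B * I) := by rw [← exp_add]; ring_nf
  have hadd : cexp (-(A + B * I)) = cexp (-A) * cexp (-B * I) := by rw [← exp_add]; ring_nf
  rw [Complex.cosh, Complex.cos, hsub, hadd]
  linear_combination ((cexp (B * I) + cexp (-B * I)) / 2 - cexp (-A) / 2) * hA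
    - cexp A * cexp (-A) ^ 2 / 2 * hB

/-- If a factor vanishes, both sides are `0` by the convention `0⁻¹ = 0`. -/
lemma inv_cosh_sub_cos_eq (a b θ x : ℂ) :
    (cosh (a * x) - cos (b * x + θ))⁻¹ =
      2 * (cexp (-(a * x)) / ((1 - cexp (θ * I) * cexp (-((a - b * I) * x))) *
        (1 - cexp (-(θ * I)) * cexp (-((a + b * I) * x))))) := by
  have hsub : cexp (-(a * x - (b * x + θ) * I)) = cexp (θ * I) * cexp (-((a - b * I) * x)) := by
    rw [← exp_add]; ring_nf
  have hadd : cexp (-(a * x + (b * x + θ) * I)) =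
      cexp (-(θ * I)) * cexp (-((a + b * I) * x)) := by
    rw [← exp_add]; ring_nf
  rw [cosh_sub_cos_eq_cexp_mul, hsub, hadd, exp_neg (a * x), inv_div, div_eq_mul_inv, mul_inv]
  ring

lemma integral_cpow_div_cosh_sub_cos {s a b : ℂ} (hs : 2 < s.re) (ha : 0 < a.re)
    (hb₁ : -a.re < b.im) (hb₂ : b.im < a.re) (θ : ℝ) :
    (1 / (2 * Gamma s)) * ∫ x in Ioi (0 : ℝ),
        (x : ℂ) ^ (s - 1) / (cosh (a * x) - cos (b * x + θ)) =
      ∑' nm : ℕ × ℕ, cexp (θ * I) ^ nm.1 * cexp (-(θ * I)) ^ nm.2 *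
        (a + nm.1 * (a - b * I) + nm.2 * (a + b * I)) ^ (-s) := by
  have hΓ : Gamma s ≠ 0 := Gamma_ne_zero_of_re_pos (by linarith)
  have hsum := hasSum_mellin_geometric (u := cexp (θ * I)) (v := cexp (-(θ * I))) (w := a)
    (α := a - b * I) (β := a + b * I) hs (by simp [norm_exp]) (by simp [norm_exp]) ha
    (by rw [sub_re, mul_I_re]; linarith) (by rw [add_re, mul_I_re]; linarith)
  simp only [mellin, smul_eq_mul] at hsum
  simp only [div_eq_mul_inv _ (_ - _), inv_cosh_sub_cos_eq, mul_left_comm _ (2 : ℂ)]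
  rw [integral_const_mul, ← hsum.tsum_eq, tsum_mul_left]
  simp only [div_eq_mul_inv _ (_ ^ s), ← cpow_neg]
  rw [one_div, ← mul_assoc 2, inv_mul_cancel_left₀ (by simp [hΓ])]

theorem berndt_integral_barnesZeta2 (s a b : ℂ) (hs : 2 < s.re) (ha : 0 < a.re)
    (hb₁ : -a.re < b.im) (hb₂ : b.im < a.re) :
    ((1 / (2 * Complex.Gamma s)) *
        ∫ x in Set.Ioi (0 : ℝ),
          (x : ℂ) ^ (s - 1) / (Complex.cosh (a * x) - Complex.cos (b * x)) =
      barnesZeta2 s a (a - b * Complex.I) (a + b * Complex.I)) ∧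
    ((1 / (2 * Complex.Gamma s)) *
        ∫ x in Set.Ioi (0 : ℝ),
          (x : ℂ) ^ (s - 1) / (Complex.cosh (a * x) + Complex.cos (b * x)) =
      barnesZeta2Alt s a (a - b * Complex.I) (a + b * Complex.I)) ∧
    ((1 / (2 * Complex.Gamma s)) *
        ∫ x in Set.Ioi (0 : ℝ),
          (x : ℂ) ^ (s - 1) / (Complex.cosh x - Complex.cos x) =
      barnesZeta2 s 1 (1 - Complex.I) (1 + Complex.I)) := by
  refine ⟨?_, ?_, ?_⟩
  · simpa [barnesZeta2] using integral_cpow_div_cosh_sub_cos hs ha hb₁ hb₂ 0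
  · simpa [barnesZeta2Alt, exp_neg, pow_add, cos_add_pi] using
      integral_cpow_div_cosh_sub_cos hs ha hb₁ hb₂ Real.pi
  · simpa [barnesZeta2] using
      integral_cpow_div_cosh_sub_cos (a := 1) (b := 1) hs (by simp) (by simp) (by simp) 0
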